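/- arXiv:1508.07337 — 3 statements merged into one kernel-verified Lean document; each statement's English description precedes it below -/
import Mathlib

section
/- Let G be a directed graph. Then the affine zero locus Z̃(G) = {p : E(G) → ℂ | f(p) = 0 for all f ∈ Ĩ(G)} of the strong incidence ideal is a union of finitely many ℂ-linear subspaces of ℂ^{E(G)}, and the Krull dimension of the ring ℚ[E(G)]/Ĩ_ℚ(G) equals α̃(G). -/
open MvPolynomial

/-- The `l`-th elementary symmetric polynomial in the finite set `s` of variables
(`1` for `l = 0`, `0` for `l > |s|`). -/
noncomputable def esymmOf (R : Type) [CommRing R] {E : Type} (s : Finset E) (l : ℕ) :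
    MvPolynomial E R :=
  ∑ t ∈ s.powersetCard l, ∏ x ∈ t, X x

/-- The strong incidence ideal: generated, for each vertex `v`, by
`e_1(out) - e_1(in)` together with `e_l(out)` and `e_l(in)` for all `l ≥ 2`
(these vanish for `l` larger than the out-degree resp. in-degree). -/
noncomputable def strongIncidenceIdeal (R : Type) [CommRing R] {V E : Type}
    [Fintype E] [DecidableEq V] (src tgt : E → V) : Ideal (MvPolynomial E R) :=
  Ideal.span ({f | ∃ v : V,
      f = esymmOf R (Finset.univ.filter fun x => src x = v) 1
        - esymmOf R (Finset.univ.filter fun x => tgt x = v) 1} ∪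
    {f | ∃ (v : V) (l : ℕ), 2 ≤ l ∧
      (f = esymmOf R (Finset.univ.filter fun x => src x = v) l ∨
       f = esymmOf R (Finset.univ.filter fun x => tgt x = v) l)})

/-- The affine zero locus in `ℂ^E` of an ideal of `ℤ[E]`. -/
def zeroLocus {E : Type} (I : Ideal (MvPolynomial E ℤ)) : Set (E → ℂ) :=
  {p | ∀ f ∈ I, MvPolynomial.aeval p f = 0}

/-- A directed cycle in the directed graph with edge-endpoint maps `src`, `tgt`:
pairwise distinct vertices `v_0, …, v_n` and edges `x_0, …, x_n` with `x_i` going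
from `v_i` to `v_{i+1}` (indices mod `n+1`). -/
structure DirCycle {V E : Type} (src tgt : E → V) where
  n : ℕ
  vtx : ZMod (n + 1) → V
  edge : ZMod (n + 1) → E
  vtx_inj : Function.Injective vtx
  edge_src : ∀ i, src (edge i) = vtx i
  edge_tgt : ∀ i, tgt (edge i) = vtx (i + 1)

/-- `C` is the set of edges of a directed cycle.  (A directed cycle, considered up to
cyclic permutation, is uniquely determined by its set of edges.) -/
def IsCycle {V E : Type} (src tgt : E → V) (C : Set E) : Prop :=
  ∃ c : DirCycle src tgt, C = Set.range c.edge

/-- `α̃(G)`: the maximal number of pairwise (vertex-)disjoint directed cycles.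
(The vertex set of the directed cycle with edge set `C` is `src '' C`.) -/
noncomputable def strongCyclePacking {V E : Type} (src tgt : E → V) : ℕ :=
  sSup {k | ∃ f : Fin k → Set E, (∀ i, IsCycle src tgt (f i)) ∧
    ∀ i j, i ≠ j → Disjoint (src '' f i) (src '' f j)}

/-!
Over a domain, the relations `e_l = 0` with `l ≥ 2` say that at every vertex at most one outgoing
and at most one incoming edge have a nonzero value, and the linear relation then says that these
two values agree.  So a point of the zero locus is a flow that is constant along each of a family
of pairwise disjoint directed cycles.  Such flows with a prescribed support form a linear space,
and there are only finitely many possible supports.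

For the dimension, `k` disjoint cycles carrying independent variables give a surjection from the
coordinate ring onto a polynomial ring in `k` variables.  Conversely, the quotient of the coordinate
ring by a prime is generated by the values of a flow in a domain.  These take at most one nonzero
value per cycle, so the quotient is the image of a polynomial ring in at most `α̃(G)` variables.
-/

section Packing

variable {V E : Type} {src tgt : E → V} {ι : Type*}

lemma DirCycle.image_src_range_edge (c : DirCycle src tgt) :
    src '' Set.range c.edge = Set.range c.vtx := by
  rw [← Set.range_comp]
  exact congrArg Set.range (funext c.edge_src)

/-- A family of pairwise disjoint directed cycles, that is, cycles without common vertices. -/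
def IsVertexDisjoint (c : ι → DirCycle src tgt) : Prop :=
  Pairwise (Function.onFun Disjoint fun i => Set.range (c i).vtx)

lemma strongCyclePacking_eq_sSup (src tgt : E → V) :
    strongCyclePacking src tgt =
      sSup {k | ∃ c : Fin k → DirCycle src tgt, IsVertexDisjoint c} := by
  refine congrArg sSup (Set.ext fun k => ⟨?_, ?_⟩)
  · rintro ⟨f, hf, hdisj⟩
    choose c hc using hf
    refine ⟨c, fun i j hij => ?_⟩
    simpa only [hc, DirCycle.image_src_range_edge] using hdisj i j hij
  · rintro ⟨c, hc⟩
    refine ⟨fun i => Set.range (c i).edge, fun i => ⟨c i, rfl⟩, fun i j hij => ?_⟩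
    simpa only [DirCycle.image_src_range_edge] using hc hij

namespace IsVertexDisjoint

variable {c : ι → DirCycle src tgt}

lemma injective_vtx (hc : IsVertexDisjoint c) :
    Function.Injective fun a : Σ i, ZMod ((c i).n + 1) => (c a.1).vtx a.2 := by
  rintro ⟨i, a⟩ ⟨j, b⟩ hab
  obtain rfl : i = j := by
    by_contra hij
    exact Set.disjoint_left.mp (hc hij) ⟨a, rfl⟩ ⟨b, hab.symm⟩
  exact congrArg (Sigma.mk i) ((c i).vtx_inj hab)

lemma injective_edge_zero (hc : IsVertexDisjoint c) :
    Function.Injective fun i => (c i).edge 0 := by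
  intro i j hij
  have hvtx : (c i).vtx 0 = (c j).vtx 0 := by
    simpa only [DirCycle.edge_src] using congrArg src hij
  have hsigma : (⟨i, 0⟩ : Σ i, ZMod ((c i).n + 1)) = ⟨j, 0⟩ := hc.injective_vtx hvtx
  exact congrArg Sigma.fst hsigma

end IsVertexDisjoint

lemma bddAbove_card_isVertexDisjoint [Finite E] (src tgt : E → V) :
    BddAbove {k | ∃ c : Fin k → DirCycle src tgt, IsVertexDisjoint c} := by
  refine ⟨Nat.card E, ?_⟩
  rintro k ⟨c, hc⟩
  simpa using Nat.card_le_card_of_injective _ hc.injective_edge_zero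

lemma IsVertexDisjoint.card_le_strongCyclePacking [Finite E] [Finite ι]
    {c : ι → DirCycle src tgt} (hc : IsVertexDisjoint c) :
    Nat.card ι ≤ strongCyclePacking src tgt := by
  rw [strongCyclePacking_eq_sSup]
  exact le_csSup (bddAbove_card_isVertexDisjoint src tgt)
    ⟨c ∘ (Finite.equivFin ι).symm, hc.comp_of_injective (Finite.equivFin ι).symm.injective⟩

lemma exists_isVertexDisjoint_strongCyclePacking [Finite E] (src tgt : E → V) :
    ∃ c : Fin (strongCyclePacking src tgt) → DirCycle src tgt, IsVertexDisjoint c := by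
  rw [strongCyclePacking_eq_sSup]
  have hempty : ∃ c : Fin 0 → DirCycle src tgt, IsVertexDisjoint c :=
    ⟨fun i => i.elim0, fun i => i.elim0⟩
  exact Nat.sSup_mem ⟨0, hempty⟩ (bddAbove_card_isVertexDisjoint src tgt)

end Packing

section CycleSystem

variable {V E : Type} {src tgt : E → V} {T : Type*} {e : T → E} {σ : Equiv.Perm T}

/-- A system of disjoint directed cycles, presented by its edges `e` and the permutation `σ` sending
each edge to its successor; the individual cycles are the orbits of `σ`. -/
structure IsCycleSystem (src tgt : E → V) (e : T → E) (σ : Equiv.Perm T) : Prop where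
  src_injective : Function.Injective (src ∘ e)
  src_next : ∀ a, src (e (σ a)) = tgt (e a)

lemma apply_eq_of_sameCycle {β : Type*} {f : T → β} (hf : ∀ a, f (σ a) = f a) {a b : T}
    (hab : σ.SameCycle a b) : f a = f b := by
  obtain ⟨n, rfl⟩ := hab
  have hzpow : ∀ a, f ((σ ^ n) a) = f a :=
    zpow_induction_right (P := fun τ : Equiv.Perm T => ∀ a, f (τ a) = f a) (fun _ => rfl)
      (fun τ hτ a => (hτ (σ a)).trans (hf a))
      (fun τ hτ a => (hτ (σ⁻¹ a)).trans (by simpa using (hf (σ⁻¹ a)).symm)) n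
  exact (hzpow a).symm

namespace IsCycleSystem

lemma injective (h : IsCycleSystem src tgt e σ) : Function.Injective e :=
  h.src_injective.of_comp

lemma tgt_injective (h : IsCycleSystem src tgt e σ) : Function.Injective (tgt ∘ e) := by
  have hcomp : tgt ∘ e = (src ∘ e) ∘ σ := funext fun a => (h.src_next a).symm
  rw [hcomp]
  exact h.src_injective.comp σ.injective

variable [Finite T]

/-- The directed cycle traversed by the orbit of `a`. -/
noncomputable def orbitCycle (h : IsCycleSystem src tgt e σ) (a : T) : DirCycle src tgt :=
  have period_eq : Function.minimalPeriod σ a - 1 + 1 = Function.minimalPeriod σ a :=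
    Nat.sub_add_cancel
      (Function.minimalPeriod_pos_of_mem_periodicPts (σ.injective.mem_periodicPts a))
  { n := Function.minimalPeriod σ a - 1
    vtx := fun i => src (e (σ^[i.val] a))
    edge := fun i => e (σ^[i.val] a)
    vtx_inj := fun i j hij => ZMod.val_injective _ <|
      Function.iterate_injOn_Iio_minimalPeriod ((ZMod.val_lt i).trans_eq period_eq)
        ((ZMod.val_lt j).trans_eq period_eq) (h.src_injective hij)
    edge_src := fun _ => rfl
    edge_tgt := fun i => by
      rw [← h.src_next, ← Function.iterate_succ_apply' σ, ZMod.val_add, ZMod.val_one_eq_one_mod,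
        Nat.add_mod_mod]
      generalize i.val = m
      rw [period_eq, Function.iterate_mod_minimalPeriod_eq] }

lemma sameCycle_of_orbitCycle_vtx_eq (h : IsCycleSystem src tgt e σ) {a b : T}
    {i : ZMod ((h.orbitCycle a).n + 1)} {j : ZMod ((h.orbitCycle b).n + 1)}
    (hij : (h.orbitCycle a).vtx i = (h.orbitCycle b).vtx j) : σ.SameCycle a b := by
  have hiter : σ^[i.val] a = σ^[j.val] b := h.src_injective hij
  rw [Equiv.Perm.iterate_eq_pow, Equiv.Perm.iterate_eq_pow] at hiter
  rw [← Equiv.Perm.sameCycle_pow_left (n := i.val), hiter, Equiv.Perm.sameCycle_pow_left]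

lemma isVertexDisjoint_orbitCycle (h : IsCycleSystem src tgt e σ) :
    IsVertexDisjoint fun q : Quotient (Equiv.Perm.SameCycle.setoid σ) => h.orbitCycle q.out := by
  intro q r hqr
  refine Set.disjoint_left.mpr ?_
  rintro _ ⟨i, rfl⟩ ⟨j, hij⟩
  exact hqr (Quotient.out_equiv_out.mp (h.sameCycle_of_orbitCycle_vtx_eq hij.symm))

lemma card_orbits_le_strongCyclePacking [Finite E] (h : IsCycleSystem src tgt e σ) :
    Nat.card (Quotient (Equiv.Perm.SameCycle.setoid σ)) ≤ strongCyclePacking src tgt :=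
  h.isVertexDisjoint_orbitCycle.card_le_strongCyclePacking

end IsCycleSystem

lemma IsVertexDisjoint.isCycleSystem {ι : Type*} {c : ι → DirCycle src tgt}
    (hc : IsVertexDisjoint c) :
    IsCycleSystem src tgt (fun a : Σ i, ZMod ((c i).n + 1) => (c a.1).edge a.2)
      (Equiv.sigmaCongrRight fun _ => Equiv.addRight 1) where
  src_injective := by
    simpa only [Function.comp_def, DirCycle.edge_src] using hc.injective_vtx
  src_next := fun ⟨i, j⟩ => ((c i).edge_src (j + 1)).trans ((c i).edge_tgt j).symm

end CycleSystem

section Flow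

open Function

variable {V E : Type} [Fintype E] [DecidableEq V] {src tgt : E → V} {A : Type*} [Semiring A]
  {p : E → A}

/-- The `A`-valued functions on the edges for which inflow equals outflow at every vertex. -/
def circulations (A : Type*) [Semiring A] (src tgt : E → V) : Submodule A (E → A) :=
  ⨅ v, LinearMap.eqLocus (∑ x with src x = v, LinearMap.proj x)
    (∑ x with tgt x = v, LinearMap.proj x)

lemma mem_circulations_iff :
    p ∈ circulations A src tgt ↔
      ∀ v, ∑ x with src x = v, p x = ∑ x with tgt x = v, p x := by
  simp [circulations]

/-- The circulations for which every vertex has at most one outgoing and at most one incoming edge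
of nonzero value.  Over a domain, these are the zeros of the strong incidence ideal. -/
structure IsStrongFlow (src tgt : E → V) (p : E → A) : Prop where
  mem_circulations : p ∈ circulations A src tgt
  injOn_src : (support p).InjOn src
  injOn_tgt : (support p).InjOn tgt

lemma sum_filter_extend_zero {T : Type*} [Fintype T] {e : T → E} (he : Injective e) (g : E → V)
    (w : T → A) (v : V) :
    ∑ x with g x = v, extend e w 0 x = ∑ a with g (e a) = v, w a := by
  simp only [Finset.sum_filter]
  refine (Fintype.sum_of_injective e he _ _ (fun x hx => ?_) (fun a => ?_)).symm
  · simp [extend_apply' _ _ _ hx]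
  · simp [he.extend_apply]

lemma IsCycleSystem.isStrongFlow_extend {T : Type*} {e : T → E} {σ : Equiv.Perm T}
    (h : IsCycleSystem src tgt e σ) {w : T → A} (hw : ∀ a, w (σ a) = w a) :
    IsStrongFlow src tgt (extend e w 0) := by
  have := Fintype.ofInjective e h.injective
  have hsupp : support (extend e w 0) ⊆ Set.range e :=
    support_extend_zero_subset.trans (Set.image_subset_range _ _)
  refine ⟨mem_circulations_iff.mpr fun v => ?_, h.src_injective.injOn_range.mono hsupp,
    h.tgt_injective.injOn_range.mono hsupp⟩
  rw [sum_filter_extend_zero h.injective, sum_filter_extend_zero h.injective,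
    Finset.sum_filter, Finset.sum_filter, ← Equiv.sum_comp σ]
  simp only [h.src_next, hw]

lemma sum_fiber_eq_of_injOn_support {g : E → V} (hg : (support p).InjOn g) {x : E}
    (hx : x ∈ support p) : ∑ z with g z = g x, p z = p x := by
  refine Finset.sum_eq_single_of_mem x (by simp) fun z hz hzx => ?_
  by_contra hpz
  exact hzx (hg hpz hx (Finset.mem_filter.mp hz).2)

namespace IsStrongFlow

lemma exists_next (h : IsStrongFlow src tgt p) {x : E} (hx : x ∈ support p) :
    ∃ y ∈ support p, src y = tgt x ∧ p y = p x := by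
  have hout : ∑ z with src z = tgt x, p z = p x :=
    (mem_circulations_iff.mp h.mem_circulations (tgt x)).trans
      (sum_fiber_eq_of_injOn_support h.injOn_tgt hx)
  obtain ⟨y, hy, hpy⟩ := Finset.exists_ne_zero_of_sum_ne_zero (hout.trans_ne hx)
  have hyx : src y = tgt x := (Finset.mem_filter.mp hy).2
  exact ⟨y, hpy, hyx, by rw [← hout, ← hyx, sum_fiber_eq_of_injOn_support h.injOn_src hpy]⟩

lemma exists_isCycleSystem (h : IsStrongFlow src tgt p) :
    ∃ σ : Equiv.Perm (support p),
      IsCycleSystem src tgt Subtype.val σ ∧ ∀ x, p (σ x) = p x := by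
  have hnext (x : support p) : ∃ y : support p, src y = tgt x ∧ p y = p x := by
    obtain ⟨y, hy, hyx⟩ := h.exists_next x.2
    exact ⟨⟨y, hy⟩, hyx⟩
  choose next src_next map_next using hnext
  have hinj : Injective next := fun x y hxy =>
    Subtype.ext (h.injOn_tgt x.2 y.2 (by rw [← src_next, ← src_next, hxy]))
  exact ⟨Equiv.ofBijective next (Finite.injective_iff_bijective.mp hinj),
    ⟨h.injOn_src.injective, src_next⟩, map_next⟩

end IsStrongFlow

lemma setOf_isStrongFlow_eq_iUnion (src tgt : E → V) :
    {p : E → A | IsStrongFlow src tgt p} =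
      ⋃ S : {S : Set E // S.InjOn src ∧ S.InjOn tgt},
        ((circulations A src tgt ⊓ Submodule.pi S.1ᶜ fun _ => ⊥ : Submodule A (E → A)) :
          Set (E → A)) := by
  ext p
  have hpi (S : Set E) : p ∈ Submodule.pi Sᶜ (fun _ => (⊥ : Submodule A A)) ↔ support p ⊆ S := by
    simp only [Submodule.mem_pi, Submodule.mem_bot, support_subset_iff', Set.mem_compl_iff]
  simp only [Set.mem_ofPred_eq, Set.mem_iUnion, SetLike.mem_coe, Submodule.mem_inf, hpi]
  constructor
  · exact fun h => ⟨⟨support p, h.injOn_src, h.injOn_tgt⟩, h.mem_circulations, subset_rfl⟩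
  · rintro ⟨⟨S, hsrc, htgt⟩, hp, hpS⟩
    exact ⟨hp, hsrc.mono hpS, htgt.mono hpS⟩

end Flow

section StrongIncidenceIdeal

open Function

variable {V E R : Type} {A : Type*} [CommRing R] [CommRing A] [Algebra R A] {p : E → A}

lemma aeval_esymmOf (p : E → A) (s : Finset E) (l : ℕ) :
    aeval p (esymmOf R s l) = ∑ t ∈ s.powersetCard l, ∏ x ∈ t, p x := by
  simp [esymmOf]

lemma aeval_esymmOf_one (p : E → A) (s : Finset E) :
    aeval p (esymmOf R s 1) = ∑ x ∈ s, p x := by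
  simp [aeval_esymmOf, Finset.powersetCard_one]

lemma aeval_esymmOf_eq_zero {s : Finset E} (hs : (↑s ∩ support p).Subsingleton) {l : ℕ}
    (hl : 2 ≤ l) : aeval p (esymmOf R s l) = 0 := by
  rw [aeval_esymmOf]
  refine Finset.sum_eq_zero fun t ht => ?_
  obtain ⟨hts, rfl⟩ := Finset.mem_powersetCard.mp ht
  obtain ⟨x, hx, y, hy, hxy⟩ := Finset.one_lt_card.mp hl
  by_contra hprod
  have hne {z : E} (hz : z ∈ t) : p z ≠ 0 := fun h0 => hprod (Finset.prod_eq_zero hz h0)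
  exact hxy (hs ⟨hts hx, hne hx⟩ ⟨hts hy, hne hy⟩)

-- If `p` has `l` nonzero values on `s`, then the only nonzero term of `e_l` is their product.
lemma subsingleton_of_aeval_esymmOf_eq_zero [IsDomain A] {s : Finset E}
    (h : ∀ l, 2 ≤ l → aeval p (esymmOf R s l) = 0) : (↑s ∩ support p).Subsingleton := by
  classical
  set t := {x ∈ s | p x ≠ 0} with ht
  have ht_coe : ↑s ∩ support p = (t : Set E) := by ext; simp [ht]
  rw [ht_coe, ← Finset.card_le_one_iff_subsingleton]
  by_contra! hcard
  have hprod := h t.card hcard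
  rw [aeval_esymmOf, Finset.sum_eq_single_of_mem t
    (Finset.mem_powersetCard.mpr ⟨Finset.filter_subset _ _, rfl⟩)] at hprod
  · obtain ⟨x, hx, hx0⟩ := Finset.prod_eq_zero_iff.mp hprod
    exact (Finset.mem_filter.mp hx).2 hx0
  · intro u hu hut
    obtain ⟨hus, hucard⟩ := Finset.mem_powersetCard.mp hu
    by_contra hne
    refine hut (Finset.eq_of_subset_of_card_le (fun x hx => ?_) hucard.ge)
    exact Finset.mem_filter.mpr ⟨hus hx, fun h0 => hne (Finset.prod_eq_zero hx h0)⟩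

variable [Fintype E] [DecidableEq V] {src tgt : E → V}

lemma injOn_support_iff_forall_subsingleton {g : E → V} :
    (support p).InjOn g ↔
      ∀ v, (↑({x | g x = v} : Finset E) ∩ support p).Subsingleton := by
  simp only [Finset.coe_filter, Finset.mem_univ, true_and]
  constructor
  · rintro h v x ⟨hx, hpx⟩ y ⟨hy, hpy⟩
    exact h hpx hpy (hx.trans hy.symm)
  · intro h x hpx y hpy hxy
    exact h (g y) ⟨hxy, hpx⟩ ⟨rfl, hpy⟩

lemma IsStrongFlow.strongIncidenceIdeal_le_ker (h : IsStrongFlow src tgt p) :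
    strongIncidenceIdeal R src tgt ≤ RingHom.ker (aeval p : MvPolynomial E R →ₐ[R] A) := by
  rw [strongIncidenceIdeal, Ideal.span_le]
  rintro f (⟨v, rfl⟩ | ⟨v, l, hl, rfl | rfl⟩)
  · rw [SetLike.mem_coe, RingHom.mem_ker, map_sub, aeval_esymmOf_one, aeval_esymmOf_one,
      mem_circulations_iff.mp h.mem_circulations v, sub_self]
  · exact aeval_esymmOf_eq_zero (injOn_support_iff_forall_subsingleton.mp h.injOn_src v) hl
  · exact aeval_esymmOf_eq_zero (injOn_support_iff_forall_subsingleton.mp h.injOn_tgt v) hl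

theorem isStrongFlow_iff_strongIncidenceIdeal_le_ker [IsDomain A] :
    IsStrongFlow src tgt p ↔
      strongIncidenceIdeal R src tgt ≤ RingHom.ker (aeval p : MvPolynomial E R →ₐ[R] A) := by
  refine ⟨IsStrongFlow.strongIncidenceIdeal_le_ker, fun h => ⟨?_, ?_, ?_⟩⟩
  · refine mem_circulations_iff.mpr fun v => ?_
    have hv : aeval p (esymmOf R _ 1 - esymmOf R _ 1) = 0 :=
      h (Ideal.subset_span (Or.inl ⟨v, rfl⟩))
    rwa [map_sub, aeval_esymmOf_one, aeval_esymmOf_one, sub_eq_zero] at hv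
  · exact injOn_support_iff_forall_subsingleton.mpr fun v =>
      subsingleton_of_aeval_esymmOf_eq_zero fun l hl =>
        h (Ideal.subset_span (Or.inr ⟨v, l, hl, Or.inl rfl⟩))
  · exact injOn_support_iff_forall_subsingleton.mpr fun v =>
      subsingleton_of_aeval_esymmOf_eq_zero fun l hl =>
        h (Ideal.subset_span (Or.inr ⟨v, l, hl, Or.inr rfl⟩))

theorem exists_submodules_zeros_strongIncidenceIdeal_eq_iUnion (R A) [CommRing R] [CommRing A]
    [IsDomain A] [Algebra R A] (src tgt : E → V) :
    ∃ (r : ℕ) (L : Fin r → Submodule A (E → A)),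
      {p : E → A | ∀ f ∈ strongIncidenceIdeal R src tgt, aeval p f = 0} =
        ⋃ i, (L i : Set (E → A)) := by
  have hzeros : {p : E → A | ∀ f ∈ strongIncidenceIdeal R src tgt, aeval p f = 0} =
      {p | IsStrongFlow src tgt p} :=
    Set.ext fun _ => isStrongFlow_iff_strongIncidenceIdeal_le_ker.symm
  rw [hzeros, setOf_isStrongFlow_eq_iUnion]
  let supports := Finite.equivFin {S : Set E // S.InjOn src ∧ S.InjOn tgt}
  exact ⟨_, _, (supports.symm.surjective.iUnion_comp _).symm⟩

end StrongIncidenceIdeal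

section KrullDimension

lemma ringKrullDim_eq_iSup_quotient (A : Type*) [CommRing A] :
    ringKrullDim A = ⨆ P : PrimeSpectrum A, ringKrullDim (A ⧸ P.asIdeal) := by
  rw [ringKrullDim, Order.krullDim_eq_iSup_coheight]
  refine iSup_congr fun P => ?_
  rw [ringKrullDim_quotient, Order.coheight_eq_krullDim_Ici]
  rfl

section Generators

variable {R A ι : Type*} [CommRing R] [CommRing A] [Algebra R A]

lemma aeval_surjective_of_range_subset_adjoin {κ : Type*} {p : κ → A} {q : ι → A}
    (hp : Function.Surjective (aeval p : MvPolynomial κ R →ₐ[R] A))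
    (hpq : Set.range p ⊆ Algebra.adjoin R (Set.range q)) :
    Function.Surjective (aeval q : MvPolynomial ι R →ₐ[R] A) := by
  rw [← AlgHom.range_eq_top, ← Algebra.adjoin_range_eq_range_aeval] at hp ⊢
  exact top_le_iff.mp (hp.ge.trans (Algebra.adjoin_le hpq))

lemma ringKrullDim_le_add_card_of_aeval_surjective [IsNoetherianRing R] [Finite ι] {q : ι → A}
    (hq : Function.Surjective (aeval q : MvPolynomial ι R →ₐ[R] A)) :
    ringKrullDim A ≤ ringKrullDim R + Nat.card ι :=
  (ringKrullDim_le_of_surjective (aeval q : MvPolynomial ι R →ₐ[R] A).toRingHom hq).trans_eq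
    MvPolynomial.ringKrullDim_of_isNoetherianRing

end Generators

variable {V E R : Type} [Fintype E] [DecidableEq V] {src tgt : E → V} [CommRing R]
  [IsNoetherianRing R]

lemma IsStrongFlow.ringKrullDim_le {A : Type*} [CommRing A] [Algebra R A] {p : E → A}
    (h : IsStrongFlow src tgt p)
    (hp : Function.Surjective (aeval p : MvPolynomial E R →ₐ[R] A)) :
    ringKrullDim A ≤ ringKrullDim R + (strongCyclePacking src tgt : ℕ) := by
  obtain ⟨σ, hσ, hpσ⟩ := h.exists_isCycleSystem
  let q : Quotient (Equiv.Perm.SameCycle.setoid σ) → A :=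
    Quotient.lift (p ∘ Subtype.val) fun _ _ => apply_eq_of_sameCycle (f := p ∘ Subtype.val) hpσ
  have hpq : Set.range p ⊆ Algebra.adjoin R (Set.range q) := by
    rintro _ ⟨x, rfl⟩
    by_cases hx : p x = 0
    · exact hx ▸ zero_mem _
    · exact Algebra.subset_adjoin ⟨Quotient.mk _ ⟨x, hx⟩, rfl⟩
  calc ringKrullDim A
    _ ≤ ringKrullDim R + Nat.card (Quotient (Equiv.Perm.SameCycle.setoid σ)) :=
      ringKrullDim_le_add_card_of_aeval_surjective (aeval_surjective_of_range_subset_adjoin hp hpq)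
    _ ≤ ringKrullDim R + (strongCyclePacking src tgt : ℕ) := by
      gcongr
      exact hσ.card_orbits_le_strongCyclePacking

lemma ringKrullDim_quotient_strongIncidenceIdeal_le (R) [CommRing R] [IsNoetherianRing R]
    (src tgt : E → V) :
    ringKrullDim (MvPolynomial E R ⧸ strongIncidenceIdeal R src tgt) ≤
      ringKrullDim R + (strongCyclePacking src tgt : ℕ) := by
  rw [ringKrullDim_eq_iSup_quotient]
  refine iSup_le fun P => ?_
  let π := (Ideal.Quotient.mkₐ R P.asIdeal).comp
    (Ideal.Quotient.mkₐ R (strongIncidenceIdeal R src tgt))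
  have hπ : aeval (fun x => π (X x)) = π := (aeval_unique π).symm
  have hflow : IsStrongFlow src tgt fun x => π (X x) := by
    rw [isStrongFlow_iff_strongIncidenceIdeal_le_ker (R := R), hπ]
    intro f hf
    change Ideal.Quotient.mk P.asIdeal (Ideal.Quotient.mk _ f) = 0
    rw [Ideal.Quotient.eq_zero_iff_mem.mpr hf, map_zero]
  refine hflow.ringKrullDim_le ?_
  rw [hπ]
  exact Ideal.Quotient.mk_surjective.comp Ideal.Quotient.mk_surjective

lemma IsVertexDisjoint.add_card_le_ringKrullDim {ι : Type*} [Finite ι] {c : ι → DirCycle src tgt}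
    (hc : IsVertexDisjoint c) :
    ringKrullDim R + Nat.card ι ≤
      ringKrullDim (MvPolynomial E R ⧸ strongIncidenceIdeal R src tgt) := by
  let p : E → MvPolynomial ι R := Function.extend
    (fun a : Σ i, ZMod ((c i).n + 1) => (c a.1).edge a.2) (fun a => X a.1) 0
  have hflow : IsStrongFlow src tgt p := hc.isCycleSystem.isStrongFlow_extend fun _ => rfl
  have hX : Set.range X ⊆ (Algebra.adjoin R (Set.range p) : Set (MvPolynomial ι R)) := by
    rintro _ ⟨i, rfl⟩
    exact Algebra.subset_adjoin ⟨(c i).edge 0, hc.isCycleSystem.injective.extend_apply _ _ ⟨i, 0⟩⟩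
  have hsurj : Function.Surjective (aeval p : MvPolynomial E R →ₐ[R] MvPolynomial ι R) :=
    aeval_surjective_of_range_subset_adjoin (fun f => ⟨f, aeval_X_left_apply f⟩) hX
  rw [← MvPolynomial.ringKrullDim_of_isNoetherianRing]
  exact ringKrullDim_le_of_surjective (Ideal.Quotient.lift _ _ hflow.strongIncidenceIdeal_le_ker)
    (Ideal.Quotient.lift_surjective_of_surjective _ _ hsurj)

theorem ringKrullDim_quotient_strongIncidenceIdeal (R) [CommRing R] [IsNoetherianRing R]
    (src tgt : E → V) :
    ringKrullDim (MvPolynomial E R ⧸ strongIncidenceIdeal R src tgt) =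
      ringKrullDim R + (strongCyclePacking src tgt : ℕ) := by
  obtain ⟨c, hc⟩ := exists_isVertexDisjoint_strongCyclePacking src tgt
  refine (ringKrullDim_quotient_strongIncidenceIdeal_le R src tgt).antisymm ?_
  simpa only [Nat.card_fin] using hc.add_card_le_ringKrullDim (R := R)

end KrullDimension

theorem stmt4_general {V E R : Type} {A : Type*} [Fintype E] [DecidableEq V] [CommRing R]
    [IsNoetherianRing R] [CommRing A] [IsDomain A] [Algebra R A] (src tgt : E → V) :
    (∃ (r : ℕ) (L : Fin r → Submodule A (E → A)),
        {p : E → A | ∀ f ∈ strongIncidenceIdeal R src tgt, aeval p f = 0} =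
          ⋃ i, (L i : Set (E → A))) ∧
      ringKrullDim (MvPolynomial E R ⧸ strongIncidenceIdeal R src tgt) =
        ringKrullDim R + (strongCyclePacking src tgt : ℕ) :=
  ⟨exists_submodules_zeros_strongIncidenceIdeal_eq_iUnion R A src tgt,
    ringKrullDim_quotient_strongIncidenceIdeal R src tgt⟩

theorem stmt4 {V E : Type} [Fintype V] [Fintype E] [DecidableEq V] [DecidableEq E]
    (src tgt : E → V) :
    (∃ (r : ℕ) (L : Fin r → Submodule ℂ (E → ℂ)),
        zeroLocus (strongIncidenceIdeal ℤ src tgt) = ⋃ i, (L i : Set (E → ℂ))) ∧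
      ringKrullDim (MvPolynomial E ℚ ⧸ strongIncidenceIdeal ℚ src tgt) =
        (strongCyclePacking src tgt : WithBot (WithTop ℕ)) :=
  ⟨(stmt4_general (R := ℤ) (A := ℂ) src tgt).1, by
    simpa using! (stmt4_general (R := ℚ) (A := ℚ) src tgt).2⟩
end

section
/- Let G be a directed graph. The following are equivalent: (1) G is acyclic; (2) the quotient ring ℤ[E(G)]/I(G) is finitely generated as a ℤ-module (as an abelian group); (3) there is an integer n ≥ 1 such that x^n ∈ I(G) for every edge variable x ∈ E(G); (4) the Krull dimension of ℤ[E(G)]/I(G) equals 1; (5) the Krull dimension of ℚ[E(G)]/I_ℚ(G) equals 0. -/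
open MvPolynomial

/-- The incidence ideal of the directed graph with edge-endpoint maps `src`, `tgt`:
the ideal generated by the incidence relations
`δ_{v,l} = e_l(edges out of v) - e_l(edges into v)` for all vertices `v` and all `l ≥ 1`
(for `l > k_v` the relation `δ_{v,l}` is the zero polynomial, so this ideal is generated by
the `δ_{v,l}` with `1 ≤ l ≤ k_v`). -/
noncomputable def incidenceIdeal (R : Type) [CommRing R] {V E : Type}
    [Fintype E] [DecidableEq V] (src tgt : E → V) : Ideal (MvPolynomial E R) :=
  Ideal.span {f | ∃ (v : V) (l : ℕ), 1 ≤ l ∧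
    f = esymmOf R (Finset.univ.filter fun x => src x = v) l
      - esymmOf R (Finset.univ.filter fun x => tgt x = v) l}

/-! A ring homomorphism `φ` kills the incidence ideal iff at every vertex the products
`∏ (1 + φ(x) T)` over the outgoing and over the incoming edges agree. Over a field, substituting
`T = -1 / φ(x)` shows that an edge with nonzero value is always followed by an edge with nonzero
value, and finitely many edges then force a directed cycle. So if the graph is acyclic, the edge
variables lie in every prime over the ideal, i.e. they are nilpotent in the quotient, which is
therefore finite over the base ring `R` and has the dimension of `R`. Conversely, giving the value
`T` to the edges of a cycle and `0` to all others maps the quotient onto `R[T]`, whose dimension is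
larger than that of `R`. -/

section CommutativeAlgebra

variable {R A B : Type*} [CommRing R] [CommRing A] [CommRing B]

theorem coeff_prod_one_add_C_mul_X {ι : Type*} (s : Finset ι) (w : ι → A) (l : ℕ) :
    (∏ x ∈ s, (1 + Polynomial.C (w x) * Polynomial.X)).coeff l =
      ∑ t ∈ s.powersetCard l, ∏ x ∈ t, w x := by
  simp only [Finset.prod_one_add, Finset.prod_mul_distrib, Finset.prod_const, ← map_prod,
    Polynomial.finsetSum_coeff, Polynomial.coeff_C_mul_X_pow, Finset.powersetCard_eq_filter,
    Finset.sum_filter, eq_comm]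

theorem ringKrullDim_le_quotient_of_le_ker {I : Ideal A} {f : A →+* B}
    (hf : Function.Surjective f) (hI : I ≤ RingHom.ker f) :
    ringKrullDim B ≤ ringKrullDim (A ⧸ I) :=
  ringKrullDim_le_of_surjective (Ideal.Quotient.lift I f hI)
    (Ideal.Quotient.lift_surjective_of_surjective I hI hf)

theorem ringKrullDim_le_of_isIntegral [Algebra R A] [Algebra.IsIntegral R A] :
    ringKrullDim A ≤ ringKrullDim R :=
  Order.krullDim_le_of_strictMono (PrimeSpectrum.comap (algebraMap R A))
    fun _ _ h => Ideal.IsIntegral.comap_lt_comap h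

theorem ringKrullDim_lt_ringKrullDim_polynomial [FiniteRingKrullDim R] :
    ringKrullDim R < ringKrullDim (Polynomial R) := by
  refine lt_of_lt_of_le ?_ ringKrullDim_succ_le_ringKrullDim_polynomial
  rw [ringKrullDim, Order.krullDim_eq_length_of_finiteDimensionalOrder]
  exact_mod_cast Nat.lt_succ_self _

theorem ringKrullDim_int : ringKrullDim ℤ = 1 :=
  IsPrincipalIdealRing.ringKrullDim_eq_one ℤ Int.not_isField

instance finiteRingKrullDim_int : FiniteRingKrullDim ℤ :=
  finiteRingKrullDim_iff_ne_bot_and_top.2 (by rw [ringKrullDim_int]; decide)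

theorem finite_quotient_of_X_mem_radical {σ : Type*} [Finite σ] {I : Ideal (MvPolynomial σ R)}
    (h : ∀ x, X x ∈ I.radical) : Module.Finite R (MvPolynomial σ R ⧸ I) := by
  let π := Ideal.Quotient.mkₐ R I
  have isIntegral_X : ∀ a ∈ Set.range (π ∘ X), IsIntegral R a := by
    rintro _ ⟨x, rfl⟩
    obtain ⟨n, hn⟩ := h x
    have pow_eq_zero : π (X x) ^ (n + 1) = 0 := by
      rw [← map_pow]
      exact Ideal.Quotient.eq_zero_iff_mem.2 (I.pow_mem_of_pow_mem hn n.le_succ)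
    exact IsIntegral.of_pow n.succ_pos (pow_eq_zero ▸ isIntegral_zero)
  have adjoin_X : Algebra.adjoin R (Set.range (π ∘ X)) = ⊤ := by
    rw [Set.range_comp, ← AlgHom.map_adjoin, adjoin_range_X, Algebra.map_top,
      AlgHom.range_eq_top]
    exact Ideal.Quotient.mkₐ_surjective R I
  rw [Module.finite_def, ← Algebra.top_toSubmodule, ← adjoin_X]
  exact fg_adjoin_of_finite (Set.finite_range _) isIntegral_X

theorem exists_forall_pow_mem_of_forall_mem_radical {ι : Type*} [Finite ι] {I : Ideal A}
    {a : ι → A} (h : ∀ i, a i ∈ I.radical) : ∃ n, 1 ≤ n ∧ ∀ i, a i ^ n ∈ I := by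
  have eventually_mem (i : ι) : ∀ᶠ n in Filter.atTop, a i ^ n ∈ I :=
    let ⟨m, hm⟩ := h i
    Filter.eventually_atTop.2 ⟨m, fun _ hmn => I.pow_mem_of_pow_mem hm hmn⟩
  exact ((Filter.eventually_ge_atTop 1).and (Filter.eventually_all.2 eventually_mem)).exists

end CommutativeAlgebra

section Cycle

theorem nonempty_periodicPts {α : Type*} [Finite α] [Nonempty α] (f : α → α) :
    (Function.periodicPts f).Nonempty := by
  obtain ⟨a⟩ := ‹Nonempty α›
  obtain ⟨m, n, hmn, h⟩ : ∃ m n, m < n ∧ f^[m] a = f^[n] a := by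
    exact Set.finite_univ.exists_lt_map_eq_of_forall_mem (f := (f^[·] a)) fun _ => Set.mem_univ _
  refine ⟨f^[m] a, Function.mk_mem_periodicPts (Nat.sub_pos_of_lt hmn) ?_⟩
  rw [Function.IsPeriodicPt, Function.IsFixedPt, ← Function.iterate_add_apply,
    Nat.sub_add_cancel hmn.le, h]

variable {V E : Type} {src tgt : E → V}

theorem exists_isCycle_of_mem_periodicPts {W : Type*} {f : W → W} {w : W}
    (hw : w ∈ Function.periodicPts f) {vtx : W → V} (hvtx : Function.Injective vtx) {edge : W → E}
    (hsrc : ∀ u, src (edge u) = vtx u) (htgt : ∀ u, tgt (edge u) = vtx (f u)) :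
    ∃ C, IsCycle src tgt C := by
  obtain ⟨k, hk⟩ := Nat.exists_eq_succ_of_ne_zero
    (Function.minimalPeriod_pos_of_mem_periodicPts hw).ne'
  have iterate_val_add_one (i : ZMod (k + 1)) : f^[(i + 1).val] w = f (f^[i.val] w) := by
    rw [← Function.iterate_succ_apply' f, ← Function.iterate_mod_minimalPeriod_eq (n := i.val + 1),
      hk, ZMod.val_add, ZMod.val_one_eq_one_mod, Nat.add_mod_mod]
  have iterate_val_injective : Function.Injective fun i : ZMod (k + 1) => f^[i.val] w :=
    fun i j hij => ZMod.val_injective _ <| Function.iterate_injOn_Iio_minimalPeriod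
      (hk ▸ ZMod.val_lt i) (hk ▸ ZMod.val_lt j) hij
  exact ⟨_, ⟨k, fun i => vtx (f^[i.val] w), fun i => edge (f^[i.val] w),
    hvtx.comp iterate_val_injective, fun i => hsrc _,
    fun i => by rw [htgt, iterate_val_add_one]⟩, rfl⟩

theorem exists_isCycle_of_forall_exists_src_eq_tgt [Finite E] {S : Set E} (hS : S.Nonempty)
    (h : ∀ x ∈ S, ∃ y ∈ S, src y = tgt x) : ∃ C, IsCycle src tgt C := by
  have := (hS.image src).to_subtype
  choose edge edge_mem src_edge using fun v : src '' S => v.2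
  let next (v : src '' S) : src '' S := ⟨tgt (edge v), h _ (edge_mem v)⟩
  obtain ⟨w, hw⟩ := nonempty_periodicPts next
  exact exists_isCycle_of_mem_periodicPts hw Subtype.val_injective src_edge fun _ => rfl

theorem DirCycle.edge_injective (c : DirCycle src tgt) : Function.Injective c.edge := by
  intro i j hij
  apply c.vtx_inj
  rw [← c.edge_src, ← c.edge_src, hij]

theorem IsCycle.nonempty {C : Set E} (hC : IsCycle src tgt C) : C.Nonempty := by
  obtain ⟨c, rfl⟩ := hC
  exact Set.range_nonempty c.edge

theorem IsCycle.prod_mulIndicator_src_eq_tgt [Fintype E] [DecidableEq V] {M : Type*} [CommMonoid M]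
    {C : Set E} (hC : IsCycle src tgt C) (b : M) (v : V) :
    ∏ x with src x = v, C.mulIndicator (fun _ => b) x =
      ∏ x with tgt x = v, C.mulIndicator (fun _ => b) x := by
  obtain ⟨c, rfl⟩ := hC
  have prod_edge (p : E → Prop) [DecidablePred p] :
      ∏ x with p x, (Set.range c.edge).mulIndicator (fun _ => b) x =
        ∏ i, if p (c.edge i) then b else 1 := by
    rw [Finset.prod_filter]
    refine (Fintype.prod_of_injective c.edge c.edge_injective _ _ ?_ ?_).symm
    · intro x hx
      simp [hx]
    · simp
  simp only [prod_edge, c.edge_src, c.edge_tgt]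
  exact (Equiv.prod_comp (Equiv.addRight 1) fun i => if c.vtx i = v then b else 1).symm

end Cycle

section IncidenceIdeal

variable {R V E : Type} [CommRing R]

theorem map_esymmOf {A : Type*} [CommRing A] (φ : MvPolynomial E R →+* A) (s : Finset E) (l : ℕ) :
    φ (esymmOf R s l) =
      (∏ x ∈ s, (1 + Polynomial.C (φ (X x)) * Polynomial.X)).coeff l := by
  simp only [esymmOf, map_sum, map_prod, coeff_prod_one_add_C_mul_X]

variable [Fintype E] [DecidableEq V] {src tgt : E → V}

theorem incidenceIdeal_le_ker_iff {A : Type*} [CommRing A] {φ : MvPolynomial E R →+* A} :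
    incidenceIdeal R src tgt ≤ RingHom.ker φ ↔
      ∀ v, ∏ x with src x = v, (1 + Polynomial.C (φ (X x)) * Polynomial.X) =
        ∏ x with tgt x = v, (1 + Polynomial.C (φ (X x)) * Polynomial.X) := by
  have relation_mem_ker_iff (v : V) (l : ℕ) :
      esymmOf R {x | src x = v} l - esymmOf R {x | tgt x = v} l ∈ RingHom.ker φ ↔
        (∏ x with src x = v, (1 + Polynomial.C (φ (X x)) * Polynomial.X)).coeff l =
          (∏ x with tgt x = v, (1 + Polynomial.C (φ (X x)) * Polynomial.X)).coeff l := by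
    rw [RingHom.mem_ker, map_sub, sub_eq_zero, map_esymmOf, map_esymmOf]
  rw [incidenceIdeal, Ideal.span_le]
  constructor
  · intro h v
    ext l
    rcases Nat.eq_zero_or_pos l with rfl | hl
    · simp [coeff_prod_one_add_C_mul_X]
    · exact (relation_mem_ker_iff v l).1 (h ⟨v, l, hl, rfl⟩)
  · rintro h _ ⟨v, l, -, rfl⟩
    exact (relation_mem_ker_iff v l).2 (congrArg (Polynomial.coeff · l) (h v))

theorem exists_src_eq_tgt_of_map_X_ne_zero {K : Type*} [Field K] {φ : MvPolynomial E R →+* K}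
    (hφ : incidenceIdeal R src tgt ≤ RingHom.ker φ) {x : E} (hx : φ (X x) ≠ 0) :
    ∃ y, φ (X y) ≠ 0 ∧ src y = tgt x := by
  have eval_eq := congrArg (Polynomial.eval (-(φ (X x))⁻¹)) (incidenceIdeal_le_ker_iff.1 hφ (tgt x))
  simp only [Polynomial.eval_prod, Polynomial.eval_add, Polynomial.eval_one, Polynomial.eval_mul,
    Polynomial.eval_C, Polynomial.eval_X] at eval_eq
  rw [Finset.prod_eq_zero (i := x) (s := {y | tgt y = tgt x}) (by simp) (by simp [hx]),
    Finset.prod_eq_zero_iff] at eval_eq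
  obtain ⟨y, hy, eval_factor⟩ := eval_eq
  refine ⟨y, fun hy0 => ?_, (Finset.mem_filter.1 hy).2⟩
  simp [hy0] at eval_factor

theorem X_mem_radical_incidenceIdeal (h : ¬ ∃ C, IsCycle src tgt C) (x : E) :
    X x ∈ (incidenceIdeal R src tgt).radical := by
  rw [Ideal.radical_eq_sInf, Ideal.mem_sInf]
  rintro P ⟨hP, _⟩
  by_contra hx
  let φ := algebraMap (MvPolynomial E R) P.ResidueField
  have ker_φ : RingHom.ker φ = P := P.ker_algebraMap_residueField
  exact h <| exists_isCycle_of_forall_exists_src_eq_tgt (S := {y | X y ∉ RingHom.ker φ})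
    ⟨x, by rwa [Set.mem_ofPred, ker_φ]⟩
    fun y hy => exists_src_eq_tgt_of_map_X_ne_zero (hP.trans_eq ker_φ.symm) hy

theorem incidenceIdeal_le_ker_aeval_zero :
    incidenceIdeal R src tgt ≤ RingHom.ker (aeval (0 : E → R)).toRingHom := by
  simp [incidenceIdeal_le_ker_iff]

theorem IsCycle.incidenceIdeal_le_ker_aeval_indicator {C : Set E} (hC : IsCycle src tgt C)
    {A : Type*} [CommRing A] [Algebra R A] (a : A) :
    incidenceIdeal R src tgt ≤ RingHom.ker (aeval (R := R) (C.indicator fun _ => a)).toRingHom := by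
  have factor_eq (x : E) : 1 + Polynomial.C (C.indicator (fun _ => a) x) * Polynomial.X =
      C.mulIndicator (fun _ => 1 + Polynomial.C a * Polynomial.X) x := by
    by_cases hx : x ∈ C <;> simp [hx]
  simpa [incidenceIdeal_le_ker_iff, factor_eq] using hC.prod_mulIndicator_src_eq_tgt _

theorem ringKrullDim_le_ringKrullDim_quotient_incidenceIdeal :
    ringKrullDim R ≤ ringKrullDim (MvPolynomial E R ⧸ incidenceIdeal R src tgt) :=
  ringKrullDim_le_quotient_of_le_ker (fun r => ⟨C r, by simp⟩) incidenceIdeal_le_ker_aeval_zero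

theorem IsCycle.ringKrullDim_polynomial_le_ringKrullDim_quotient_incidenceIdeal {C : Set E}
    (hC : IsCycle src tgt C) :
    ringKrullDim (Polynomial R) ≤
      ringKrullDim (MvPolynomial E R ⧸ incidenceIdeal R src tgt) := by
  obtain ⟨x, hx⟩ := hC.nonempty
  refine ringKrullDim_le_quotient_of_le_ker (fun p => ⟨Polynomial.aeval (X x) p, ?_⟩)
    (hC.incidenceIdeal_le_ker_aeval_indicator Polynomial.X)
  simp [← Polynomial.aeval_algHom_apply, hx]

end IncidenceIdeal

theorem stmt7_general (R : Type) [CommRing R] [FiniteRingKrullDim R] {V E : Type} [Fintype E]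
    [DecidableEq V] (src tgt : E → V) :
    List.TFAE
      [¬ ∃ C : Set E, IsCycle src tgt C,
       Module.Finite R (MvPolynomial E R ⧸ incidenceIdeal R src tgt),
       ∃ n : ℕ, 1 ≤ n ∧ ∀ x : E, (X x : MvPolynomial E R) ^ n ∈ incidenceIdeal R src tgt,
       ringKrullDim (MvPolynomial E R ⧸ incidenceIdeal R src tgt) = ringKrullDim R] := by
  tfae_have 1 → 3 := fun h =>
    exists_forall_pow_mem_of_forall_mem_radical (X_mem_radical_incidenceIdeal h)
  tfae_have 3 → 2 := fun ⟨n, _, hn⟩ => finite_quotient_of_X_mem_radical fun x => ⟨n, hn x⟩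
  tfae_have 2 → 4 := fun _ =>
    (ringKrullDim_le_of_isIntegral (R := R)).antisymm
      ringKrullDim_le_ringKrullDim_quotient_incidenceIdeal
  tfae_have 4 → 1 := by
    rintro hdim ⟨C, hC⟩
    have := hC.ringKrullDim_polynomial_le_ringKrullDim_quotient_incidenceIdeal (R := R)
    exact (hdim ▸ this).not_gt ringKrullDim_lt_ringKrullDim_polynomial
  tfae_finish

theorem stmt7 {V E : Type} [Fintype V] [Fintype E] [DecidableEq V] [DecidableEq E]
    (src tgt : E → V) :
    List.TFAE
      [¬ ∃ C : Set E, IsCycle src tgt C,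
       Module.Finite ℤ (MvPolynomial E ℤ ⧸ incidenceIdeal ℤ src tgt),
       ∃ n : ℕ, 1 ≤ n ∧ ∀ x : E, (X x : MvPolynomial E ℤ) ^ n ∈ incidenceIdeal ℤ src tgt,
       ringKrullDim (MvPolynomial E ℤ ⧸ incidenceIdeal ℤ src tgt) = 1,
       ringKrullDim (MvPolynomial E ℚ ⧸ incidenceIdeal ℚ src tgt) = 0] := by
  have hZ := ringKrullDim_int ▸ stmt7_general ℤ src tgt
  have hQ := ringKrullDim_eq_zero_of_field ℚ ▸ stmt7_general ℚ src tgt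
  tfae_have 1 ↔ 2 := hZ.out 0 1
  tfae_have 1 ↔ 3 := hZ.out 0 2
  tfae_have 1 ↔ 4 := hZ.out 0 3
  tfae_have 1 ↔ 5 := hQ.out 0 3
  tfae_finish
end

section
/- Let G be a directed graph and E a subset of E(G). Then α_E(G) is at most the Krull dimension of ℚ[E]/(I_ℚ(G) ∩ ℚ[E]), which in turn is at most the Krull dimension of ℤ[E]/(I(G) ∩ ℤ[E]) minus 1. -/
open MvPolynomial

/-- `α_F(G)`: the maximal number of pairwise edge-disjoint directed cycles, each of which
contains at least one edge in `F`. -/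
noncomputable def cyclePackingThrough {V E : Type} (src tgt : E → V) (F : Set E) : ℕ :=
  sSup {k | ∃ f : Fin k → Set E, (∀ i, IsCycle src tgt (f i)) ∧
    (∀ i, ∃ x ∈ f i, x ∈ F) ∧ ∀ i j, i ≠ j → Disjoint (f i) (f j)}

/-!
Given edge-disjoint cycles `c₁, …, c_k`, send every edge of `cᵢ` to a variable `Tᵢ` and every other
edge to `0`.  The successor along the cycles matches the nonzero values on the edges entering a
vertex with those on the edges leaving it, so the incidence relations are killed.  If every cycle
meets `F`, the restriction to `K[F]` still surjects onto `K[T₁, …, T_k]`, which has dimension at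
least `k`.

For the second inequality, let `J_K`, `J_R` be the elimination ideals over the fraction field
`K` of `R` and over `R`, and contract a chain of primes from `K[F]/J_K` to `R[F]/J_R`.  Clearing
denominators shows that the chain stays strict, and its members meet `R` trivially.  By Zariski's
lemma a maximal ideal of a finite type algebra over a Jacobson domain which is not a field meets `R`
nontrivially, so the chain can be prolonged by one step.
-/

section KrullDimension

theorem krullDim_add_one_le_of_strictMono {α β : Type*} [Preorder α] [Preorder β] (f : α → β)
    (hf : StrictMono f) (hlt : ∀ a, ∃ b, f a < b) :
    Order.krullDim α + 1 ≤ Order.krullDim β := by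
  cases isEmpty_or_nonempty α
  · simp [Order.krullDim_eq_bot]
  · have : Nonempty β := .map f inferInstance
    rw [Order.krullDim_eq_iSup_height_of_nonempty, Order.krullDim_eq_iSup_height_of_nonempty]
    norm_cast
    rw [ENat.iSup_add]
    refine iSup_le fun a => ?_
    obtain ⟨b, hab⟩ := hlt a
    calc Order.height a + 1 ≤ Order.height (f a) + 1 := by
          gcongr; exact Order.height_le_height_apply_of_strictMono f hf a
      _ ≤ Order.height b := Order.height_add_one_le hab
      _ ≤ ⨆ b, Order.height b := le_iSup _ b

variable {A B : Type*} [CommRing A] [CommRing B]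

theorem strictMono_comap_of_associated (φ : A →+* B) (hφ : ∀ b, ∃ a, Associated (φ a) b) :
    StrictMono (PrimeSpectrum.comap φ) := by
  have reflects_le (P Q : PrimeSpectrum B)
      (h : PrimeSpectrum.comap φ P ≤ PrimeSpectrum.comap φ Q) : P ≤ Q := by
    intro b hb
    obtain ⟨a, hab⟩ := hφ b
    have ha : φ a ∈ P.asIdeal := P.asIdeal.mem_of_dvd hab.dvd' hb
    exact Q.asIdeal.mem_of_dvd hab.dvd (h ha)
  exact fun P Q hPQ =>
    lt_of_le_not_ge (fun _ ha => hPQ.le ha) fun hQP => hPQ.not_ge (reflects_le Q P hQP)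

theorem isMaximal_comap_algebraMap_of_finiteType {R : Type*} [CommRing R] [IsJacobsonRing R]
    [Algebra R A] [Algebra.FiniteType R A] (M : Ideal A) [M.IsMaximal] :
    (M.comap (algebraMap R A)).IsMaximal := by
  let _ := Ideal.Quotient.field M
  have : Module.Finite R (A ⧸ M) := finite_of_finite_type_of_isJacobsonRing R (A ⧸ M)
  have hM : M.comap (algebraMap R A) = (⊥ : Ideal (A ⧸ M)).comap (algebraMap R (A ⧸ M)) := by
    ext r
    exact (Ideal.Quotient.eq_zero_iff_mem (I := M)).symm
  rw [hM]
  exact Ideal.isMaximal_comap_of_isIntegral_of_isMaximal ⊥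

theorem ringKrullDim_add_one_le_of_finiteType {R : Type*} [CommRing R] [IsJacobsonRing R]
    (hR : ¬ IsField R) [Algebra R A] [Algebra.FiniteType R A] (φ : A →+* B)
    (hunit : ∀ r ≠ 0, IsUnit (φ (algebraMap R A r))) (hφ : ∀ b, ∃ a, Associated (φ a) b) :
    ringKrullDim B + 1 ≤ ringKrullDim A := by
  refine krullDim_add_one_le_of_strictMono _ (strictMono_comap_of_associated φ hφ) fun P => ?_
  set I := PrimeSpectrum.comap φ P
  obtain ⟨M, hM, hIM⟩ := Ideal.exists_le_maximal I.asIdeal I.isPrime.ne_top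
  refine ⟨⟨M, hM.isPrime⟩, lt_of_le_of_ne hIM fun hIM_eq => ?_⟩
  have hMφ : M = P.asIdeal.comap φ := (congrArg PrimeSpectrum.asIdeal hIM_eq).symm
  have hmax : (M.comap (algebraMap R A)).IsMaximal := isMaximal_comap_algebraMap_of_finiteType M
  have : Nontrivial R := (Submodule.nontrivial_iff R).1 ⟨_, _, hmax.ne_top⟩
  obtain ⟨r, hrM, hr⟩ := Submodule.exists_mem_ne_zero_of_ne_bot
    (Ring.ne_bot_of_isMaximal_of_not_isField hmax hR)
  have hrP : φ (algebraMap R A r) ∈ P.asIdeal := by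
    rwa [Ideal.mem_comap, hMφ] at hrM
  exact P.isPrime.ne_top (Ideal.eq_top_of_isUnit_mem _ hrP (hunit r hr))

theorem isJacobsonRing_of_jacobson_bot {R : Type*} [CommRing R] [Ring.DimensionLEOne R]
    (h : (⊥ : Ideal R).jacobson = ⊥) : IsJacobsonRing R := by
  rw [isJacobsonRing_iff_prime_eq]
  intro P hP
  rcases eq_or_ne P ⊥ with rfl | hP_ne
  · exact h
  · have := hP.isMaximal hP_ne
    exact Ideal.jacobson_eq_self_of_isMaximal

theorem int_jacobson_bot : (⊥ : Ideal ℤ).jacobson = ⊥ := by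
  refine le_antisymm (fun x hx => ?_) Ideal.le_jacobson
  have hunit : IsUnit (x * x + 1) := Ideal.mem_jacobson_bot.1 hx x
  rw [Ideal.mem_bot]
  rcases Int.isUnit_iff.1 hunit with h | h
  · exact mul_self_eq_zero.1 (by linarith)
  · nlinarith [mul_self_nonneg x]

instance int_isJacobsonRing : IsJacobsonRing ℤ :=
  isJacobsonRing_of_jacobson_bot int_jacobson_bot

end KrullDimension

section Esymm

theorem esymm_map_val_of_subset {α S : Type*} [CommRing S] {s t : Finset α} (hst : s ⊆ t)
    (g : α → S) (hg : ∀ x ∈ t, x ∉ s → g x = 0) (l : ℕ) :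
    (s.val.map g).esymm l = (t.val.map g).esymm l := by
  rw [Finset.esymm_map_val, Finset.esymm_map_val]
  refine Finset.sum_subset (Finset.powersetCard_mono hst) fun u hut hus => ?_
  rw [Finset.mem_powersetCard] at hut hus
  obtain ⟨x, hxu, hxs⟩ := Finset.not_subset.1 fun hus' => hus ⟨hus', hut.2⟩
  exact Finset.prod_eq_zero hxu (hg x (hut.1 hxu) hxs)

theorem esymm_map_preimage_val {α β S : Type*} [CommRing S] {e : β → α}
    (he : Function.Injective e) (g : α → S) (hg : ∀ x ∉ Set.range e, g x = 0) (s : Finset α)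
    (l : ℕ) :
    ((s.preimage e he.injOn).val.map (g ∘ e)).esymm l = (s.val.map g).esymm l := by
  rw [← Multiset.map_map]
  change Multiset.esymm (((s.preimage e he.injOn).map ⟨e, he⟩).val.map g) l = _
  refine esymm_map_val_of_subset (fun x hx => ?_) g (fun x hxs hx => hg x ?_) l
  · obtain ⟨p, hp, rfl⟩ := Finset.mem_map.1 hx
    exact Finset.mem_preimage.1 hp
  · rintro ⟨p, rfl⟩
    exact hx (Finset.mem_map.2 ⟨p, Finset.mem_preimage.2 hxs, rfl⟩)

theorem map_esymmOf_s9 {R S E : Type} [CommRing R] [CommRing S] (f : R →+* S) (s : Finset E) (l : ℕ) :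
    map f (esymmOf R s l) = esymmOf S s l := by
  simp [esymmOf]

theorem aeval_esymmOf_s9 {R E : Type} {S : Type*} [CommRing R] [CommRing S] [Algebra R S]
    (g : E → S) (s : Finset E) (l : ℕ) :
    aeval g (esymmOf R s l) = (s.val.map g).esymm l := by
  simp [esymmOf, Finset.esymm_map_val]

end Esymm

section IncidenceIdeal

variable {V E : Type} [Fintype E] [DecidableEq V] (src tgt : E → V)

/-- The elimination ideal `I(G) ∩ R[F]` of the incidence ideal, as an ideal of `R[F]`; it is the
annihilator of the `R[F]`-module `R[E(G)] / I(G)`. -/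
noncomputable abbrev incidenceEliminationIdeal (R : Type) [CommRing R] (F : Set E) :
    Ideal (MvPolynomial F R) :=
  (incidenceIdeal R src tgt).comap (rename (Subtype.val : F → E)).toRingHom

theorem incidenceIdeal_le_comap_map {R S : Type} [CommRing R] [CommRing S] (f : R →+* S) :
    incidenceIdeal R src tgt ≤ (incidenceIdeal S src tgt).comap (map f) := by
  rw [incidenceIdeal, Ideal.span_le]
  rintro _ ⟨v, l, hl, rfl⟩
  rw [SetLike.mem_coe, Ideal.mem_comap, map_sub, map_esymmOf_s9, map_esymmOf_s9]
  exact Ideal.subset_span ⟨v, l, hl, rfl⟩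

theorem incidenceEliminationIdeal_le_comap_map {R S : Type} [CommRing R] [CommRing S]
    (f : R →+* S) (F : Set E) :
    incidenceEliminationIdeal src tgt R F ≤
      (incidenceEliminationIdeal src tgt S F).comap (map f) := by
  intro a ha
  change rename Subtype.val (map f a) ∈ incidenceIdeal S src tgt
  rw [← map_rename]
  exact incidenceIdeal_le_comap_map src tgt f ha

theorem exists_associated_map_algebraMap {R S σ : Type*} [CommRing R] (M : Submonoid R)
    [CommRing S] [Algebra R S] [IsLocalization M S] (p : MvPolynomial σ S) :
    ∃ a, Associated (map (algebraMap R S) a) p := by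
  let _ : Algebra (MvPolynomial σ R) (MvPolynomial σ S) := algebraMvPolynomial
  obtain ⟨⟨a, d⟩, hd⟩ := IsLocalization.surj (M.map (C (σ := σ))) p
  exact ⟨a, .symm ⟨(IsLocalization.map_units (MvPolynomial σ S) d).unit, hd⟩⟩

theorem ringKrullDim_quotient_incidenceEliminationIdeal_add_one_le {R K : Type} [CommRing R]
    [IsJacobsonRing R] (hR : ¬ IsField R) [Field K] [Algebra R K]
    [IsFractionRing R K] (F : Set E) :
    ringKrullDim (MvPolynomial F K ⧸ incidenceEliminationIdeal src tgt K F) + 1 ≤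
      ringKrullDim (MvPolynomial F R ⧸ incidenceEliminationIdeal src tgt R F) := by
  have : Finite F := Subtype.finite
  let φ := Ideal.quotientMap _ (map (algebraMap R K))
    (incidenceEliminationIdeal_le_comap_map src tgt (algebraMap R K) F)
  refine ringKrullDim_add_one_le_of_finiteType hR φ (fun r hr => ?_) fun b => ?_
  · have hφr : φ (algebraMap R _ r) = algebraMap K _ (algebraMap R K r) :=
      congrArg (Ideal.Quotient.mk _) (map_C _ r)
    have hunit : IsUnit (algebraMap R K r) := by simpa using hr
    exact hφr ▸ hunit.map _
  · obtain ⟨p, rfl⟩ := Ideal.Quotient.mk_surjective b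
    obtain ⟨a, ha⟩ := exists_associated_map_algebraMap (nonZeroDivisors R) p
    exact ⟨Ideal.Quotient.mk _ a, ha.map (Ideal.Quotient.mk _)⟩

variable {src tgt}

theorem incidenceIdeal_le_ker_aeval {R : Type} {S J : Type*} [CommRing R] [CommRing S] [Algebra R S]
    {e : J → E} (he : Function.Injective e) (next : Equiv.Perm J)
    (hnext : ∀ p, src (e (next p)) = tgt (e p)) (g : E → S) (hg : ∀ x ∉ Set.range e, g x = 0)
    (hg_next : ∀ p, g (e (next p)) = g (e p)) :
    incidenceIdeal R src tgt ≤ RingHom.ker (aeval g : MvPolynomial E R →ₐ[R] S) := by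
  rw [incidenceIdeal, Ideal.span_le]
  rintro _ ⟨v, l, -, rfl⟩
  rw [SetLike.mem_coe, RingHom.mem_ker, map_sub, sub_eq_zero, aeval_esymmOf_s9, aeval_esymmOf_s9,
    ← esymm_map_preimage_val he g hg, ← esymm_map_preimage_val he g hg]
  have out_eq_map_in : (Finset.univ.filter (src · = v)).preimage e he.injOn =
      ((Finset.univ.filter (tgt · = v)).preimage e he.injOn).map next.toEmbedding := by
    ext q
    obtain ⟨p, rfl⟩ := next.surjective q
    simp [hnext]
  have g_comp_next : (g ∘ e) ∘ next = g ∘ e := funext hg_next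
  rw [out_eq_map_in, Finset.map_val, Multiset.map_map, Equiv.coe_toEmbedding, g_comp_next]

end IncidenceIdeal

section CyclePacking

variable {V E : Type} {src tgt : E → V}

variable {ι : Type*} (c : ι → DirCycle src tgt)

/-- The cycles of the family are pairwise edge-disjoint: a family of this kind is a packing counted
by `cyclePackingThrough` as soon as its members meet `F`. -/
def EdgeDisjoint : Prop :=
  Pairwise (Function.onFun Disjoint fun i => Set.range (c i).edge)

/-- The edges of a family of directed cycles, indexed by the cycle and the position on it. -/
def familyEdge (p : Σ i, ZMod ((c i).n + 1)) : E :=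
  (c p.1).edge p.2

/-- The step to the next edge along each cycle of a family, as a permutation of the index set of
`familyEdge`. -/
def familyNext : Equiv.Perm (Σ i, ZMod ((c i).n + 1)) :=
  Equiv.sigmaCongrRight fun _ => Equiv.addRight 1

theorem src_familyEdge_familyNext (p : Σ i, ZMod ((c i).n + 1)) :
    src (familyEdge c (familyNext c p)) = tgt (familyEdge c p) :=
  ((c p.1).edge_src _).trans ((c p.1).edge_tgt _).symm

variable {c}

theorem familyEdge_injective (hc : EdgeDisjoint c) :
    Function.Injective (familyEdge c) := by
  rintro ⟨i, a⟩ ⟨j, b⟩ (hab : (c i).edge a = (c j).edge b)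
  obtain rfl : i = j := by
    by_contra hij
    exact Set.disjoint_left.1 (hc hij) ⟨a, rfl⟩ ⟨b, hab.symm⟩
  rw [(c i).edge_injective hab]

variable (c) in
/-- The values of the evaluation attached to a family of edge-disjoint cycles: an edge on the `i`-th
cycle goes to the `i`-th variable, and an edge on no cycle goes to `0`. -/
noncomputable def cycleVariable (R : Type*) [CommRing R] : E → MvPolynomial ι R :=
  Function.extend (familyEdge c) (fun p => X p.1) 0

theorem cycleVariable_familyEdge (hc : EdgeDisjoint c) (R : Type*) [CommRing R]
    (p : Σ i, ZMod ((c i).n + 1)) :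
    cycleVariable c R (familyEdge c p) = X p.1 :=
  (familyEdge_injective hc).extend_apply _ _ p

theorem cycleVariable_eq_zero (R : Type*) [CommRing R] {x : E}
    (hx : x ∉ Set.range (familyEdge c)) : cycleVariable c R x = 0 :=
  Function.extend_apply' _ _ _ hx

theorem incidenceIdeal_le_ker_aeval_cycleVariable [Fintype E] [DecidableEq V]
    (hc : EdgeDisjoint c) (R : Type) [CommRing R] :
    incidenceIdeal R src tgt ≤ RingHom.ker (aeval (R := R) (cycleVariable c R)) :=
  incidenceIdeal_le_ker_aeval (familyEdge_injective hc) (familyNext c)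
    (src_familyEdge_familyNext c) _ (fun _ => cycleVariable_eq_zero R) fun p => by
      rw [cycleVariable_familyEdge hc, cycleVariable_familyEdge hc]; rfl

theorem surjective_aeval_cycleVariable_comp_rename {F : Set E} (hc : EdgeDisjoint c)
    (hF : ∀ i, ∃ a, (c i).edge a ∈ F) (R : Type*) [CommRing R] :
    Function.Surjective
      ((aeval (R := R) (cycleVariable c R)).comp (rename (Subtype.val : F → E))) := by
  choose a ha using hF
  intro p
  refine ⟨rename (fun i => ⟨(c i).edge (a i), ha i⟩) p, ?_⟩
  have cycleVariable_edge : cycleVariable c R ∘ (fun i => (c i).edge (a i)) = X :=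
    funext fun i => cycleVariable_familyEdge hc R ⟨i, a i⟩
  rw [AlgHom.comp_apply, rename_rename, aeval_rename]
  exact (congrArg (aeval · p) cycleVariable_edge).trans (aeval_X_left_apply p)

theorem ringKrullDim_add_natCard_le_quotient_incidenceEliminationIdeal [Fintype E] [DecidableEq V]
    [Finite ι] {F : Set E} (hc : EdgeDisjoint c) (hF : ∀ i, ∃ a, (c i).edge a ∈ F)
    (R : Type) [CommRing R] :
    ringKrullDim R + Nat.card ι ≤
      ringKrullDim (MvPolynomial F R ⧸ incidenceEliminationIdeal src tgt R F) := by
  let ψ := ((aeval (R := R) (cycleVariable c R)).comp (rename (Subtype.val : F → E))).toRingHom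
  have hψ : ∀ a ∈ incidenceEliminationIdeal src tgt R F, ψ a = 0 :=
    fun _ ha => incidenceIdeal_le_ker_aeval_cycleVariable hc R ha
  calc ringKrullDim R + Nat.card ι ≤ ringKrullDim (MvPolynomial ι R) :=
        ringKrullDim_add_natCard_le_ringKrullDim_mvPolynomial ι
    _ ≤ _ := ringKrullDim_le_of_surjective (Ideal.Quotient.lift _ ψ hψ)
        (Ideal.Quotient.lift_surjective_of_surjective _ hψ
          (surjective_aeval_cycleVariable_comp_rename hc hF R))

theorem natCard_le_natCard_of_pairwise_disjoint {α κ : Type*} {F : Set α} [Finite F]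
    {f : κ → Set α} (hf : Pairwise (Function.onFun Disjoint f)) (hF : ∀ i, ∃ x ∈ f i, x ∈ F) :
    Nat.card κ ≤ Nat.card F := by
  choose x hxf hxF using hF
  have x_injective : Function.Injective fun i => (⟨x i, hxF i⟩ : F) := fun i j hij => by
    by_contra hne
    have hxij : x i = x j := congrArg Subtype.val hij
    exact Set.disjoint_left.1 (hf hne) (hxf i) (hxij ▸ hxf j)
  exact Nat.card_le_card_of_injective _ x_injective

theorem exists_edgeDisjoint_fin_cyclePackingThrough (src tgt : E → V) (F : Set E) [Finite F] :
    ∃ c : Fin (cyclePackingThrough src tgt F) → DirCycle src tgt,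
      EdgeDisjoint c ∧ ∀ i, ∃ a, (c i).edge a ∈ F := by
  obtain ⟨f, hcycle, hF, hdisj⟩ : cyclePackingThrough src tgt F ∈ _ :=
    Nat.sSup_mem ⟨0, Fin.elim0, by simp⟩ ⟨Nat.card F, fun k ⟨_, _, hF, hdisj⟩ =>
      Nat.card_fin k ▸ natCard_le_natCard_of_pairwise_disjoint hdisj hF⟩
  choose c hc using hcycle
  obtain rfl : f = fun i => Set.range (c i).edge := funext hc
  exact ⟨c, hdisj, fun i => by simpa using hF i⟩

end CyclePacking

theorem stmt9_general {R K V E : Type} [CommRing R] [IsJacobsonRing R]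
    (hR : ¬ IsField R) [Field K] [Algebra R K] [IsFractionRing R K] [Fintype E] [DecidableEq V]
    (src tgt : E → V) (F : Set E) :
    (cyclePackingThrough src tgt F : WithBot ℕ∞) ≤
        ringKrullDim (MvPolynomial F K ⧸ incidenceEliminationIdeal src tgt K F) ∧
      ringKrullDim (MvPolynomial F K ⧸ incidenceEliminationIdeal src tgt K F) + 1 ≤
        ringKrullDim (MvPolynomial F R ⧸ incidenceEliminationIdeal src tgt R F) := by
  refine ⟨?_, ringKrullDim_quotient_incidenceEliminationIdeal_add_one_le src tgt hR F⟩
  obtain ⟨c, hc, hF⟩ := exists_edgeDisjoint_fin_cyclePackingThrough src tgt F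
  simpa using ringKrullDim_add_natCard_le_quotient_incidenceEliminationIdeal hc hF K

theorem stmt9 {V E : Type} [Fintype V] [Fintype E] [DecidableEq V] [DecidableEq E]
    (src tgt : E → V) (F : Set E) :
    (cyclePackingThrough src tgt F : WithBot (WithTop ℕ)) ≤
        ringKrullDim (MvPolynomial F ℚ ⧸
          Ideal.comap (MvPolynomial.rename (Subtype.val : F → E)).toRingHom
            (incidenceIdeal ℚ src tgt)) ∧
      ringKrullDim (MvPolynomial F ℚ ⧸
          Ideal.comap (MvPolynomial.rename (Subtype.val : F → E)).toRingHom
            (incidenceIdeal ℚ src tgt)) + 1 ≤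
        ringKrullDim (MvPolynomial F ℤ ⧸
          Ideal.comap (MvPolynomial.rename (Subtype.val : F → E)).toRingHom
            (incidenceIdeal ℤ src tgt)) := by
  exact stmt9_general Int.not_isField src tgt F
end
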